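/- Let c and m be natural numbers with c ≥ 2 and m > c. Then the complete bipartite graph K_{c,m} contains an isolating cycle of length 2c, every cycle of K_{c,m} has length at most 2c, and consequently K_{c,m} contains no cycle of length greater than 2c containing the vertex set of that isolating cycle. -/

import Mathlib

/-- A closed walk `C` in `G` is an *isolating cycle* if it is a cycle and every
connected component of the graph obtained from `G` by deleting the vertices of
`C` consists of a single vertex. -/
def SimpleGraph.IsIsolatingCycle {V : Type*} (G : SimpleGraph V) {u : V}
    (C : G.Walk u u) : Prop :=
  C.IsCycle ∧
    ∀ K : (G.induce {v : V | v ∉ C.support}).ConnectedComponent,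
      ∃ x, K.supp = {x}

/-!
A cycle enters and leaves each of its vertices once, so each vertex of a vertex cover `S` accounts
for at most two edges of the cycle. Hence no cycle is longer than `2 * #S`, and a cycle attaining
this bound contains all of `S`; the remaining vertices are then independent, so the cycle is
isolating. In `K_{c,m}` the side of size `c` is a vertex cover, and when `2 ≤ c ≤ m` the bound is
attained because the even cycle on `2 * c` vertices is bipartite with both sides of size `c`.
-/

open Finset SimpleGraph

section VertexCover

variable {V : Type*} {G : SimpleGraph V} {S : Finset V} {u v : V}

theorem walk_length_le_countP_add_countP {S : Set V} [DecidablePred (· ∈ S)]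
    (hS : G.IsVertexCover S) (p : G.Walk u v) :
    p.length ≤ p.support.dropLast.countP (· ∈ S) + p.support.tail.countP (· ∈ S) := by
  have countP_fst_notMem_le : p.darts.countP (fun d ↦ d.fst ∉ S) ≤
      p.darts.countP (fun d ↦ d.snd ∈ S) :=
    List.countP_mono_left fun d _ hd ↦ by
      simpa using (hS d.adj).resolve_left (by simpa using hd)
  calc p.length = p.darts.length := p.length_darts.symm
    _ = p.darts.countP (fun d ↦ d.fst ∈ S) + p.darts.countP (fun d ↦ d.fst ∉ S) := by
      simpa using p.darts.length_eq_countP_add_countP (fun d ↦ decide (d.fst ∈ S))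
    _ ≤ p.darts.countP (fun d ↦ d.fst ∈ S) + p.darts.countP (fun d ↦ d.snd ∈ S) := by gcongr
    _ = p.support.dropLast.countP (· ∈ S) + p.support.tail.countP (· ∈ S) := by
      rw [← p.map_fst_darts, ← p.map_snd_darts, List.countP_map, List.countP_map]
      rfl

theorem cycle_length_le_two_mul_card_filter [DecidableEq V] (hS : G.IsVertexCover S)
    {C : G.Walk u u} (hC : C.IsCycle) : C.length ≤ 2 * #{x ∈ S | x ∈ C.support} := by
  have countP_le : C.support.tail.countP (· ∈ S) ≤ #{x ∈ S | x ∈ C.support} := by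
    rw [List.countP_eq_length_filter, ← List.toFinset_card_of_nodup (hC.support_nodup.filter _)]
    refine card_le_card fun x hx ↦ ?_
    obtain ⟨hxC, hxS⟩ : x ∈ C.support.tail ∧ x ∈ S := by simpa using hx
    exact mem_filter.2 ⟨hxS, List.mem_of_mem_tail hxC⟩
  calc
    C.length ≤ C.support.dropLast.countP (· ∈ S) + C.support.tail.countP (· ∈ S) := by
      simpa only [mem_coe] using walk_length_le_countP_add_countP hS C
    _ = 2 * C.support.tail.countP (· ∈ S) := by
      rw [← C.tail_support_perm_dropLast_support.countP_eq, two_mul]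
    _ ≤ 2 * #{x ∈ S | x ∈ C.support} := by gcongr

theorem cycle_length_le_two_mul_card (hS : G.IsVertexCover S) {C : G.Walk u u}
    (hC : C.IsCycle) : C.length ≤ 2 * #S := by
  classical
  exact (cycle_length_le_two_mul_card_filter hS hC).trans (by gcongr; exact filter_subset _ _)

theorem mem_support_of_two_mul_card_le_length (hS : G.IsVertexCover S) {C : G.Walk u u}
    (hC : C.IsCycle) (hlen : 2 * #S ≤ C.length) {x : V} (hx : x ∈ S) : x ∈ C.support := by
  classical
  have card_le : #S ≤ #{x ∈ S | x ∈ C.support} := by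
    have := cycle_length_le_two_mul_card_filter hS hC
    lia
  exact filter_card_eq ((card_filter_le _ _).antisymm card_le) x hx

end VertexCover

section IsolatingCycle

variable {V : Type*}

theorem exists_supp_eq_singleton_of_bot (K : (⊥ : SimpleGraph V).ConnectedComponent) :
    ∃ x, K.supp = {x} := by
  induction K using ConnectedComponent.ind with
  | h x => exact ⟨x, by ext y; simp⟩

variable {G : SimpleGraph V} {u : V} {C : G.Walk u u}

theorem isIsolatingCycle_of_isVertexCover_support (hC : C.IsCycle)
    (hcover : G.IsVertexCover {x | x ∈ C.support}) : G.IsIsolatingCycle C := by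
  have induce_eq_bot : G.induce {x | x ∉ C.support} = ⊥ :=
    eq_bot_iff_forall_not_adj.2 fun x y hxy ↦ (hcover hxy).elim x.2 y.2
  refine ⟨hC, ?_⟩
  rw [induce_eq_bot]
  exact exists_supp_eq_singleton_of_bot

theorem isIsolatingCycle_of_two_mul_card_le_length {S : Finset V} (hS : G.IsVertexCover S)
    (hC : C.IsCycle) (hlen : 2 * #S ≤ C.length) : G.IsIsolatingCycle C :=
  isIsolatingCycle_of_isVertexCover_support hC
    (hS.subset fun _ ↦ mem_support_of_two_mul_card_le_length hS hC hlen)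

end IsolatingCycle

section CompleteBipartite

variable {α β : Type*}

theorem isVertexCover_completeBipartiteGraph_inl [Fintype α] :
    (completeBipartiteGraph α β).IsVertexCover
      (univ.map Function.Embedding.inl : Finset (α ⊕ β)) := by
  rintro (a | b) (a' | b') h <;> simp at h ⊢

theorem isContained_completeBipartiteGraph_of_injOn {V : Type*} {G : SimpleGraph V}
    (color : G.Coloring Bool) {f : V → α} {g : V → β} (hf : (color.colorClass true).InjOn f)
    (hg : (color.colorClass false).InjOn g) : G ⊑ completeBipartiteGraph α β := by
  let φ (v : V) : α ⊕ β := if color v then .inl (f v) else .inr (g v)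
  have map_adj {v w : V} (h : G.Adj v w) : (completeBipartiteGraph α β).Adj (φ v) (φ w) := by
    have := color.valid h
    cases hv : color v <;> cases hw : color w <;> simp_all [φ]
  have injective : φ.Injective := by
    intro v w h
    cases hv : color v <;> cases hw : color w <;> simp only [φ, hv, hw] at h
    · exact hg hv hw (Sum.inr_injective h)
    · cases h
    · cases h
    · exact hf hv hw (Sum.inl_injective h)
  exact ⟨⟨⟨φ, map_adj⟩, injective⟩⟩

theorem injOn_half_bicoloring_of_even {n : ℕ} (hn : Even n) (b : Bool) :
    ((cycleGraph.bicoloring_of_even n hn).colorClass b).InjOn (fun i : Fin n ↦ i.val / 2) := by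
  intro i hi j hj (same_half : i.val / 2 = j.val / 2)
  have same_parity : i.val % 2 = 0 ↔ j.val % 2 = 0 :=
    decide_eq_decide.1 (hi.trans hj.symm)
  lia

theorem exists_cycle_length_eq_two_mul_card [Fintype α] (hα : 2 ≤ Fintype.card α) (f : α ↪ β) :
    ∃ (u : α ⊕ β) (C : (completeBipartiteGraph α β).Walk u u),
      C.IsCycle ∧ C.length = 2 * Fintype.card α := by
  rw [← cycleGraph_isContained_iff (by lia)]
  let color := cycleGraph.bicoloring_of_even (2 * Fintype.card α) (even_two_mul _)
  let half (i : Fin (2 * Fintype.card α)) : α :=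
    (Fintype.equivFin α).symm ⟨i.val / 2, by lia⟩
  have half_injOn (b : Bool) : (color.colorClass b).InjOn half := fun i hi j hj hij ↦
    injOn_half_bicoloring_of_even (even_two_mul _) b hi hj <| by simpa [half] using hij
  exact isContained_completeBipartiteGraph_of_injOn color (half_injOn true)
    (f.injective.comp_injOn (half_injOn false))

end CompleteBipartite

theorem completeBipartite_isolating_not_extendable_general {α β : Type*} [Fintype α]
    (hα : 2 ≤ Fintype.card α) (f : α ↪ β) :
    ∃ (u : α ⊕ β) (C : (completeBipartiteGraph α β).Walk u u),
      (completeBipartiteGraph α β).IsIsolatingCycle C ∧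
      C.length = 2 * Fintype.card α ∧
      (∀ (v : α ⊕ β) (C' : (completeBipartiteGraph α β).Walk v v),
          C'.IsCycle → C'.length ≤ 2 * Fintype.card α) ∧
      ¬ ∃ (v : α ⊕ β) (C' : (completeBipartiteGraph α β).Walk v v),
          C'.IsCycle ∧ 2 * Fintype.card α < C'.length ∧ ∀ y, y ∈ C.support → y ∈ C'.support := by
  have hS := isVertexCover_completeBipartiteGraph_inl (α := α) (β := β)
  have cycle_length_le (v : α ⊕ β) (C' : (completeBipartiteGraph α β).Walk v v)
      (hC' : C'.IsCycle) : C'.length ≤ 2 * Fintype.card α := by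
    simpa using cycle_length_le_two_mul_card hS hC'
  obtain ⟨u, C, hC, hlen⟩ := exists_cycle_length_eq_two_mul_card hα f
  refine ⟨u, C, isIsolatingCycle_of_two_mul_card_le_length hS hC (by simp [hlen]), hlen,
    cycle_length_le, ?_⟩
  rintro ⟨v, C', hC', hlt, -⟩
  exact (cycle_length_le v C' hC').not_gt hlt

/-- Let `c ≥ 2` and `m > c`. Then the complete bipartite graph `K_{c,m}`
contains an isolating cycle of length `2c`, every cycle of `K_{c,m}` has
length at most `2c`, and consequently `K_{c,m}` contains no cycle of length
greater than `2c` containing the vertex set of that isolating cycle. -/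
theorem completeBipartite_isolating_not_extendable (c m : ℕ) (hc : 2 ≤ c) (hm : c < m) :
    ∃ (u : Fin c ⊕ Fin m)
      (C : (completeBipartiteGraph (Fin c) (Fin m)).Walk u u),
      (completeBipartiteGraph (Fin c) (Fin m)).IsIsolatingCycle C ∧
      C.length = 2 * c ∧
      (∀ (v : Fin c ⊕ Fin m)
          (C' : (completeBipartiteGraph (Fin c) (Fin m)).Walk v v),
          C'.IsCycle → C'.length ≤ 2 * c) ∧
      ¬ ∃ (v : Fin c ⊕ Fin m)
          (C' : (completeBipartiteGraph (Fin c) (Fin m)).Walk v v),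
          C'.IsCycle ∧ 2 * c < C'.length ∧ ∀ y, y ∈ C.support → y ∈ C'.support := by
  simpa only [Fintype.card_fin] using
    completeBipartite_isolating_not_extendable_general (by simpa using hc) (Fin.castLEEmb hm.le)
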